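/- arXiv:0806.1083 — 5 statements merged into one kernel-verified Lean document; each statement's English description precedes it below -/
import Mathlib

section
/- Let x ∈ [-1,1], λ₁, λ₂ ∈ [0.9,1], and 0 ≤ ε ≤ 0.5. Let α ∈ [1.198 + 1.198ε, 2.281 − 0.952ε]. Suppose (u_n)_{n≥0} and (b_n)_{n≥1} are sequences with u_0 = 0, u_1 = x, u_{n+1} = λ₁ u_n + λ₁λ₂ u_{n-1} − b_n for all n ≥ 1, where each b_n ∈ {-1,1}, b_{n+1} = 1 whenever u_n + α u_{n+1} > ε, and b_{n+1} = -1 whenever u_n + α u_{n+1} < -ε. Then the state sequence is bounded: there exists M such that |u_n| ≤ M for all n. -/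
/-!
Let `s` and `-t` be the roots of `z² = λ₁ z + λ₁ λ₂`, so that `λ₁ = s - t` and `λ₁ λ₂ = s t`. In the
coordinates `p = u (n + 1) + t u n` and `q = u (n + 1) - s u n` the recursion decouples into
`p ↦ s p - b` and `q ↦ -t q - b`. The second map contracts, so it preserves `|q| ≤ 1 / (1 - t)`
whatever the bits are. The first one preserves `|p| ≤ s c + 1` as soon as `(s - 1) (s c + 1) ≤ 1`
and `b` is the sign of `p` whenever `|p| > c`. Now
`(s + t) (u n + α u (n + 1)) = (1 + α s) p - (1 - α t) q`, so the quantizer does return the sign of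
`p` for `|p| > c` provided that `|1 - α t| / (1 - t) + (s + t) ε ≤ (1 + α s) c`. Both requirements
on `c` are met by `c = (1 + ε (s + t) (s - t - s t)) / (1 + s)`.
-/

/-- `b` is a possible output of a one-bit quantizer applied to `w` with tolerance `ν`: it is the
sign of `w`, except that both signs are allowed when `|w| ≤ ν`. The flaky quantizer `Q_α^ν (u, v)`
is the case `w = u + α v`. -/
structure IsFlakySign (ν w b : ℝ) : Prop where
  eq_one_or_eq_neg_one : b = 1 ∨ b = -1
  eq_one_of_lt : ν < w → b = 1
  eq_neg_one_of_lt : w < -ν → b = -1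

namespace IsFlakySign

variable {ν w b : ℝ}

theorem abs_eq_one (h : IsFlakySign ν w b) : |b| = 1 := by
  rcases h.eq_one_or_eq_neg_one with rfl | rfl <;> simp

theorem of_mul_eq_mul_sub {a c d k p : ℝ} (h : IsFlakySign ν w b) (ha : 0 < a) (hk : 0 < k)
    (hw : k * w = a * p - d) (hd : |d| + k * ν ≤ a * c) : IsFlakySign c p b where
  eq_one_or_eq_neg_one := h.eq_one_or_eq_neg_one
  eq_one_of_lt hp := h.eq_one_of_lt <| lt_of_mul_lt_mul_left (a := k)
    (by linarith [mul_lt_mul_of_pos_left hp ha, le_abs_self d]) hk.le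
  eq_neg_one_of_lt hp := h.eq_neg_one_of_lt <| lt_of_mul_lt_mul_left (a := k)
    (by linarith [mul_lt_mul_of_pos_left hp ha, neg_abs_le d]) hk.le

theorem abs_mul_sub_le {c p s : ℝ} (h : IsFlakySign c p b) (hs : 0 ≤ s)
    (hsc : (s - 1) * (s * c + 1) ≤ 1) (hp : |p| ≤ s * c + 1) : |s * p - b| ≤ s * c + 1 := by
  obtain ⟨hp_lower, hp_upper⟩ := abs_le.1 hp
  have hsp_lower := mul_le_mul_of_nonneg_left hp_lower hs
  have hsp_upper := mul_le_mul_of_nonneg_left hp_upper hs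
  rcases h.eq_one_or_eq_neg_one with rfl | rfl
  · have hcp : -c ≤ p := by
      by_contra! hlt
      linarith [h.eq_neg_one_of_lt hlt]
    exact abs_le.2 ⟨by linarith [mul_le_mul_of_nonneg_left hcp hs], by linarith⟩
  · have hpc : p ≤ c := by
      by_contra! hlt
      linarith [h.eq_one_of_lt hlt]
    exact abs_le.2 ⟨by linarith, by linarith [mul_le_mul_of_nonneg_left hpc hs]⟩

end IsFlakySign

theorem abs_mul_sub_le_inv_one_sub_abs {r q b : ℝ} (hr : |r| < 1) (hb : |b| ≤ 1)
    (hq : |q| ≤ (1 - |r|)⁻¹) : |r * q - b| ≤ (1 - |r|)⁻¹ :=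
  calc |r * q - b| ≤ |r * q| + |b| := abs_sub _ _
    _ ≤ |r| * (1 - |r|)⁻¹ + 1 := by rw [abs_mul]; gcongr
    _ = (1 - |r|)⁻¹ := by field [sub_pos.2 hr |>.ne']

theorem exists_nonneg_sub_eq_mul_eq (a : ℝ) {m : ℝ} (hm : 0 ≤ m) :
    ∃ s t : ℝ, 0 ≤ s ∧ 0 ≤ t ∧ s - t = a ∧ s * t = m := by
  have hsq : √(a ^ 2 + 4 * m) ^ 2 = a ^ 2 + 4 * m := Real.sq_sqrt (by positivity)
  obtain ⟨hlower, hupper⟩ := abs_le.1 (Real.abs_le_sqrt (by linarith : a ^ 2 ≤ a ^ 2 + 4 * m))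
  exact ⟨(√(a ^ 2 + 4 * m) + a) / 2, (√(a ^ 2 + 4 * m) - a) / 2, by linarith, by linarith,
    by ring, by linear_combination hsq / 4⟩

theorem lt_one_of_mul_le_sub {s t : ℝ} (hs : 0 ≤ s) (hst : s * t ≤ s - t) : t < 1 := by
  by_contra! ht
  linarith [mul_le_mul_of_nonneg_left ht hs]

theorem add_le_sqrt_five {s t : ℝ} (hs : 0 ≤ s) (ht : 0 ≤ t) (hsub : s - t ≤ 1)
    (hst : s * t ≤ s - t) : s + t ≤ √5 := by
  have hsub_sq : (s - t) ^ 2 ≤ 1 := pow_le_one₀ ((mul_nonneg hs ht).trans hst) hsub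
  refine Real.le_sqrt_of_sq_le ?_
  calc (s + t) ^ 2 = (s - t) ^ 2 + 4 * (s * t) := by ring
    _ ≤ 5 := by linarith

/-- The parallelogram of states `(u n, u (n + 1))` cut out by the eigencoordinates
`u (n + 1) + t * u n` and `u (n + 1) - s * u n` of the recursion; `c` is the tolerance up to which
the bits may differ from the sign of the first of them. -/
def eigenParallelogram (s t c : ℝ) : Set (ℝ × ℝ) :=
  {z | |z.2 + t * z.1| ≤ s * c + 1 ∧ |z.2 - s * z.1| ≤ (1 - t)⁻¹}

section eigenParallelogram

variable {s t c : ℝ}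

theorem zero_mk_mem_eigenParallelogram {x : ℝ} (hsc : 0 ≤ s * c) (ht₀ : 0 ≤ t) (ht₁ : t < 1)
    (hx : |x| ≤ 1) : (0, x) ∈ eigenParallelogram s t c := by
  have hinv : 1 ≤ (1 - t)⁻¹ := (one_le_inv₀ (by linarith)).2 (by linarith)
  simp only [eigenParallelogram, Set.mem_ofPred_eq, mul_zero, add_zero, sub_zero]
  exact ⟨by linarith, hx.trans hinv⟩

theorem abs_fst_le_of_mem_eigenParallelogram {z : ℝ × ℝ} (hst : 0 < s + t)
    (hz : z ∈ eigenParallelogram s t c) : |z.1| ≤ (s * c + 1 + (1 - t)⁻¹) / (s + t) := by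
  rw [le_div_iff₀ hst]
  calc |z.1| * (s + t) = |z.1 * (s + t)| := by rw [abs_mul, abs_of_pos hst]
    _ = |(z.2 + t * z.1) - (z.2 - s * z.1)| := by ring_nf
    _ ≤ |z.2 + t * z.1| + |z.2 - s * z.1| := abs_sub _ _
    _ ≤ s * c + 1 + (1 - t)⁻¹ := add_le_add hz.1 hz.2

theorem step_mem_eigenParallelogram {α ε u v b : ℝ} (hs : 0 ≤ s) (ht₀ : 0 ≤ t) (ht₁ : t < 1)
    (hst : 0 < s + t) (hα : 0 ≤ α) (hexpand : (s - 1) * (s * c + 1) ≤ 1)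
    (hmargin : |1 - α * t| * (1 - t)⁻¹ + (s + t) * ε ≤ (1 + α * s) * c)
    (hb : IsFlakySign ε (u + α * v) b) (huv : (u, v) ∈ eigenParallelogram s t c) :
    (v, (s - t) * v + s * t * u - b) ∈ eigenParallelogram s t c := by
  obtain ⟨hp, hq⟩ : |v + t * u| ≤ s * c + 1 ∧ |v - s * u| ≤ (1 - t)⁻¹ := huv
  have hsign : IsFlakySign c (v + t * u) b := by
    refine hb.of_mul_eq_mul_sub (a := 1 + α * s) (d := (1 - α * t) * (v - s * u)) (by positivity)
      hst (by ring) (le_trans ?_ hmargin)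
    rw [abs_mul]
    gcongr
  have habs : |-t| = t := by rw [abs_neg, abs_of_nonneg ht₀]
  have hcontract : |-t * (v - s * u) - b| ≤ (1 - t)⁻¹ := by
    have := abs_mul_sub_le_inv_one_sub_abs (r := -t) (q := v - s * u)
      (habs.trans_lt ht₁) hb.abs_eq_one.le
    rw [habs] at this
    exact this hq
  constructor
  · convert hsign.abs_mul_sub_le hs hexpand hp using 2
    ring
  · convert hcontract using 2
    ring

end eigenParallelogram

/-- The tolerance within which a quantizer of tolerance `ε`, applied to `u n + α * u (n + 1)`,
detects the sign of `u (n + 1) + t * u n`. The value `1 / (1 + s)` at `ε = 0` is the least one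
possible for `α = 1`; the other term makes up for `(1 + s) * (1 - t)` exceeding `1` by
`s - t - s * t`. -/
noncomputable def signTolerance (s t ε : ℝ) : ℝ :=
  (1 + ε * (s + t) * (s - t - s * t)) / (1 + s)

section signTolerance

variable {s t ε : ℝ}

theorem one_add_mul_signTolerance (hs : 0 ≤ s) :
    (1 + s) * signTolerance s t ε = 1 + ε * (s + t) * (s - t - s * t) :=
  mul_div_cancel₀ _ (by positivity)

theorem signTolerance_nonneg (hs : 0 ≤ s) (ht : 0 ≤ t) (hε : 0 ≤ ε) (hst : s * t ≤ s - t) :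
    0 ≤ signTolerance s t ε := by
  have := sub_nonneg.2 hst
  unfold signTolerance
  positivity

theorem sub_one_mul_signTolerance_le_one (hs : 0 ≤ s) (ht : 0 ≤ t) (hε : 0 ≤ ε)
    (hsub : s - t ≤ 1) (hst : s * t ≤ s - t) (hε_le : ε * (s + t) ≤ 2) :
    (s - 1) * (s * signTolerance s t ε + 1) ≤ 1 := by
  set κ := ε * (s + t)
  set δ := s - t - s * t
  have hδ : 0 ≤ δ := sub_nonneg.2 hst
  have hκ : 0 ≤ κ := mul_nonneg hε (add_nonneg hs ht)
  have hroot : s * (s - 1) ≤ 1 - δ := by linarith [mul_le_mul_of_nonneg_left hsub hs]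
  have hroot_mul : s * (s - 1) * (κ * δ) ≤ 2 * δ :=
    calc s * (s - 1) * (κ * δ) ≤ 1 * (κ * δ) :=
          mul_le_mul_of_nonneg_right (by linarith) (mul_nonneg hκ hδ)
      _ ≤ 2 * δ := by rw [one_mul]; exact mul_le_mul_of_nonneg_right hε_le hδ
  have htol := one_add_mul_signTolerance (t := t) (ε := ε) hs
  refine le_of_mul_le_mul_left (a := 1 + s) ?_ (by positivity)
  calc (1 + s) * ((s - 1) * (s * signTolerance s t ε + 1))
      = s * (s - 1) * (κ * δ) + 2 * (s * (s - 1)) - 1 + s := by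
        linear_combination s * (s - 1) * htol
    _ ≤ (1 + s) * 1 := by linarith

theorem abs_one_sub_mul_add_le {α : ℝ} (hs : 0 ≤ s) (ht : 0 ≤ t) (hε : 0 ≤ ε)
    (hsub : s - t ≤ 1) (hst : s * t ≤ s - t) (hα : 1 + ε ≤ α) (hα' : α + ε * (s + t) ≤ 3) :
    |1 - α * t| * (1 + s) + ε * (s + t) ≤ (1 + α * s) * (1 - t) := by
  rcases abs_cases (1 - α * t) with ⟨habs, -⟩ | ⟨habs, -⟩ <;> rw [habs]
  · have : ε * (s + t) ≤ (α - 1) * (s + t) := by gcongr; linarith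
    linarith
  · have hst_mul : α * (s * t) ≤ α * (s - t) := by gcongr; linarith
    have hsub_mul : (α - 1) * (s - t) ≤ (α - 1) * 1 := by gcongr; linarith
    linarith

theorem signTolerance_margin {α : ℝ} (hs : 0 ≤ s) (ht : 0 ≤ t) (hε : 0 ≤ ε)
    (hsub : s - t ≤ 1) (hst : s * t ≤ s - t) (hα : 1 + ε ≤ α) (hα' : α + ε * (s + t) ≤ 3) :
    |1 - α * t| * (1 - t)⁻¹ + (s + t) * ε ≤ (1 + α * s) * signTolerance s t ε := by
  set κ := ε * (s + t)
  set δ := s - t - s * t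
  have hδ : 0 ≤ δ := sub_nonneg.2 hst
  have hκδ : 0 ≤ κ * δ := mul_nonneg (mul_nonneg hε (add_nonneg hs ht)) hδ
  have ht₁ : 0 < 1 - t := sub_pos.2 (lt_one_of_mul_le_sub hs hst)
  have hdet : (1 + s) * (1 - t) = 1 + δ := by ring
  have hcore := abs_one_sub_mul_add_le hs ht hε hsub hst hα hα'
  have htol := one_add_mul_signTolerance (t := t) (ε := ε) hs
  have hgain : (1 + δ) * (κ * δ) ≤ (1 + α * s) * (1 - t) * (κ * δ) := by
    have hsα : s ≤ α * s := le_mul_of_one_le_left hs (by linarith)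
    rw [← hdet]
    gcongr
  have hδ_sq : 0 ≤ κ * δ * δ := mul_nonneg hκδ hδ
  refine le_of_mul_le_mul_left (a := (1 + s) * (1 - t)) ?_ (by positivity)
  calc (1 + s) * (1 - t) * (|1 - α * t| * (1 - t)⁻¹ + (s + t) * ε)
      = |1 - α * t| * (1 + s) + (1 + δ) * κ := by
        rw [← hdet]; field
    _ ≤ (1 + α * s) * (1 - t) * (1 + κ * δ) := by linarith
    _ = (1 + s) * (1 - t) * ((1 + α * s) * signTolerance s t ε) := by
        linear_combination -((1 + α * s) * (1 - t)) * htol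

end signTolerance

theorem leaky_GRE_bounded_states_general {l₁ l₂ ε α : ℝ} {u b : ℕ → ℝ}
    (h1 : l₁ ∈ Set.Ioc (0 : ℝ) 1) (h2 : l₂ ∈ Set.Icc (0 : ℝ) 1) (hε : 0 ≤ ε)
    (hα : α ∈ Set.Icc (1 + ε) (3 - √5 * ε))
    (hu0 : u 0 = 0) (hu1 : |u 1| ≤ 1)
    (hb : ∀ n ≥ 1, b n = 1 ∨ b n = -1)
    (hrec : ∀ n ≥ 1, u (n + 1) = l₁ * u n + l₁ * l₂ * u (n - 1) - b n)
    (hq1 : ∀ n, u n + α * u (n + 1) > ε → b (n + 1) = 1)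
    (hq2 : ∀ n, u n + α * u (n + 1) < -ε → b (n + 1) = -1) :
    ∃ M, ∀ n, |u n| ≤ M := by
  obtain ⟨hl₁, hl₁'⟩ := h1
  obtain ⟨hl₂, hl₂'⟩ := h2
  obtain ⟨hα, hα'⟩ := hα
  obtain ⟨s, t, hs, ht₀, hsub, hmul⟩ := exists_nonneg_sub_eq_mul_eq l₁ (mul_nonneg hl₁.le hl₂)
  have hst : s * t ≤ s - t := by rw [hsub, hmul]; exact mul_le_of_le_one_right hl₁.le hl₂'
  have hsub' : s - t ≤ 1 := hsub.trans_le hl₁'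
  have hpos : 0 < s + t := by linarith
  have ht₁ : t < 1 := lt_one_of_mul_le_sub hs hst
  have hε_sum : ε * (s + t) ≤ √5 * ε := by
    rw [mul_comm]
    exact mul_le_mul_of_nonneg_right (add_le_sqrt_five hs ht₀ hsub' hst) hε
  have hmem (n : ℕ) : (u n, u (n + 1)) ∈ eigenParallelogram s t (signTolerance s t ε) := by
    induction n with
    | zero =>
      rw [hu0]
      exact zero_mk_mem_eigenParallelogram (mul_nonneg hs (signTolerance_nonneg hs ht₀ hε hst))
        ht₀ ht₁ hu1
    | succ n ih =>
      rw [hrec (n + 1) n.succ_pos, ← hmul, ← hsub, Nat.add_sub_cancel]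
      exact step_mem_eigenParallelogram hs ht₀ ht₁ hpos (by linarith)
        (sub_one_mul_signTolerance_le_one hs ht₀ hε hsub' hst (by linarith))
        (signTolerance_margin hs ht₀ hε hsub' hst hα (by linarith))
        ⟨hb _ n.succ_pos, hq1 n, hq2 n⟩ ih
  exact ⟨_, fun n => abs_fst_le_of_mem_eigenParallelogram hpos (hmem n)⟩

/-- For α ∈ [1.198+1.198ε, 2.281−0.952ε] and a flaky quantizer with tolerance at most ε,
the leaky GRE state sequence starting from (0,x) with x ∈ [-1,1] is bounded. -/
theorem leaky_GRE_bounded_states (x l₁ l₂ ε α : ℝ)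
    (hx : x ∈ Set.Icc (-1 : ℝ) 1)
    (h1 : l₁ ∈ Set.Icc (0.9 : ℝ) 1) (h2 : l₂ ∈ Set.Icc (0.9 : ℝ) 1)
    (hε : 0 ≤ ε) (hε' : ε ≤ 0.5)
    (hα : α ∈ Set.Icc (1.198 + 1.198 * ε) (2.281 - 0.952 * ε))
    (u b : ℕ → ℝ)
    (hu0 : u 0 = 0) (hu1 : u 1 = x)
    (hb : ∀ n ≥ 1, b n = 1 ∨ b n = -1)
    (hrec : ∀ n ≥ 1, u (n + 1) = l₁ * u n + l₁ * l₂ * u (n - 1) - b n)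
    (hq1 : ∀ n, u n + α * u (n + 1) > ε → b (n + 1) = 1)
    (hq2 : ∀ n, u n + α * u (n + 1) < -ε → b (n + 1) = -1) :
    ∃ M, ∀ n, |u n| ≤ M := by
  have hsqrt : √5 * ε ≤ 2.24 * ε := by gcongr; exact Real.sqrt_le_iff.2 (by norm_num)
  exact leaky_GRE_bounded_states_general ⟨by linarith [h1.1], h1.2⟩ ⟨by linarith [h2.1], h2.2⟩ hε
    ⟨by linarith [hα.1], by linarith [hα.2]⟩ hu0 (hu1 ▸ abs_le.2 hx) hb hrec hq1 hq2
end

section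
/- For every ρ with 0 < ρ ≤ 0.649 there exists δ > 0 such that for every sequence (a_j)_{j≥1} with a_j ∈ {-1,0,1} and every x ∈ [0, ρ]: if 1 + Σ_{j=1}^∞ a_j x^j < δ, then Σ_{j=1}^∞ j a_j x^{j-1} < -δ. -/
/-!
Let `h(x) = 1 + ∑ cₙ xⁿ` with `cₙ = -1` for `n < k`, `c_k = t` and `cₙ = 1` for `n > k`. If
`|aₙ| ≤ 1` for all `n ≥ 1` and `g(x) = 1 + ∑ aₙ xⁿ`, then the coefficients of `g - h` are
nonnegative before degree `k` and nonpositive after it, so every term of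
`x (g - h)' - k (g - h) = ∑ (n - k) (aₙ - cₙ) xⁿ` is nonpositive. Hence `g(x) < h(x)` forces
`g'(x) < h'(x)`, and `g` inherits `δ`-transversality from the inequalities `h ≥ δ` and `h' ≤ -δ`.
Because the coefficients of `h'` also change sign only once, these need to be checked only at
the right endpoint. For `ρ = 0.649` the choice `k = 4`, `t = 0.0894` works.
-/

open Finset

/-- The power series `1 + ∑ aₙ xⁿ` over `n ≥ 1`; the value `a 0` is ignored. -/
noncomputable def unitSeries (a : ℕ → ℝ) (x : ℝ) : ℝ :=
  1 + ∑' j : ℕ, a (j + 1) * x ^ (j + 1)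

/-- The term-by-term derivative `∑ n aₙ xⁿ⁻¹` of `unitSeries a`, indexed by `j = n - 1`. -/
noncomputable def unitSeriesDeriv (a : ℕ → ℝ) (x : ℝ) : ℝ :=
  ∑' j : ℕ, ((j : ℝ) + 1) * a (j + 1) * x ^ j

/-- `δ`-transversality on `[0, ρ]`, for the class of power series with constant term `1` and all
other coefficients real numbers in `[-1, 1]`. -/
def IsTransversalOn (δ ρ : ℝ) : Prop :=
  ∀ a : ℕ → ℝ, (∀ n ≥ 1, |a n| ≤ 1) → ∀ x ∈ Set.Icc 0 ρ,
    unitSeries a x < δ → unitSeriesDeriv a x < -δ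

/-- The coefficients, in degrees `n ≥ 1`, of Solomyak's `(*)`-functions
`1 - x - ⋯ - xᵏ⁻¹ + t xᵏ + xᵏ⁺¹ + xᵏ⁺² + ⋯`, with which all other series are compared. -/
def starCoeff (k : ℕ) (t : ℝ) (n : ℕ) : ℝ :=
  if n < k then -1 else if n = k then t else 1

section Summability

variable {a : ℕ → ℝ} {A x : ℝ}

theorem hasSum_succ_mul_pow (hx : |x| < 1) :
    HasSum (fun j : ℕ => ((j : ℝ) + 1) * x ^ j) (1 / (1 - x) ^ 2) := by
  simpa [-one_div] using hasSum_choose_mul_geometric_of_norm_lt_one 1 (r := x) hx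

theorem summable_unitSeries (ha : ∀ n ≥ 1, |a n| ≤ A) (hx : |x| < 1) :
    Summable fun j : ℕ => a (j + 1) * x ^ (j + 1) := by
  have hgeom : Summable fun j : ℕ => A * |x| ^ (j + 1) :=
    ((summable_nat_add_iff 1).2 (summable_geometric_of_lt_one (abs_nonneg x) hx)).mul_left A
  refine hgeom.of_norm_bounded fun j => ?_
  rw [Real.norm_eq_abs, abs_mul, abs_pow]
  gcongr
  exact ha _ (Nat.le_add_left 1 j)

theorem abs_unitSeriesDeriv_term_le {r : ℝ} (ha : ∀ n ≥ 1, |a n| ≤ A) (hx : |x| ≤ r) (j : ℕ) :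
    |((j : ℝ) + 1) * a (j + 1) * x ^ j| ≤ A * (((j : ℝ) + 1) * r ^ j) := by
  have hA : |a (j + 1)| ≤ A := ha _ (Nat.le_add_left 1 j)
  have hA₀ : 0 ≤ A := (abs_nonneg _).trans hA
  calc |((j : ℝ) + 1) * a (j + 1) * x ^ j| = |a (j + 1)| * (((j : ℝ) + 1) * |x| ^ j) := by
        rw [abs_mul, abs_mul, abs_pow, abs_of_nonneg (by positivity : (0 : ℝ) ≤ (j : ℝ) + 1)]
        ring
    _ ≤ A * (((j : ℝ) + 1) * r ^ j) := by gcongr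

theorem summable_unitSeriesDeriv (ha : ∀ n ≥ 1, |a n| ≤ A) (hx : |x| < 1) :
    Summable fun j : ℕ => ((j : ℝ) + 1) * a (j + 1) * x ^ j :=
  ((hasSum_succ_mul_pow (by rwa [abs_abs])).summable.mul_left A).of_norm_bounded
    (abs_unitSeriesDeriv_term_le ha le_rfl)

theorem hasDerivAt_unitSeries (ha : ∀ n ≥ 1, |a n| ≤ A) (hx : |x| < 1) :
    HasDerivAt (unitSeries a) (unitSeriesDeriv a x) x := by
  obtain ⟨r, hxr, hr⟩ := exists_between hx
  have hr₀ : 0 < r := (abs_nonneg x).trans_lt hxr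
  have hbound : Summable fun j : ℕ => A * (((j : ℝ) + 1) * r ^ j) :=
    (hasSum_succ_mul_pow (by rwa [abs_of_pos hr₀])).summable.mul_left A
  refine (hasDerivAt_tsum_of_isPreconnected (g := fun j y => a (j + 1) * y ^ (j + 1))
    (g' := fun j y => ((j : ℝ) + 1) * a (j + 1) * y ^ j) hbound Metric.isOpen_ball
    (convex_ball (0 : ℝ) r).isPreconnected (fun j y _ => ?_) (fun j y hy => ?_)
    (Metric.mem_ball_self hr₀) (by simp) (by simpa using hxr)).const_add 1
  · simpa [mul_comm, mul_assoc, mul_left_comm] using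
      (hasDerivAt_pow (j + 1) y).const_mul (a (j + 1))
  · exact abs_unitSeriesDeriv_term_le ha (by simpa using (mem_ball_zero_iff.1 hy).le) j

end Summability

section ClosedForm

variable {b : ℕ → ℝ} {k : ℕ} {x : ℝ}

theorem unitSeries_eq_of_eventually_one (hb : ∀ n > k, b n = 1) (hx : |x| < 1) :
    unitSeries b x = 1 / (1 - x) + ∑ j ∈ range k, (b (j + 1) - 1) * x ^ (j + 1) := by
  have hgeom : HasSum (fun j : ℕ => x ^ (j + 1)) ((1 - x)⁻¹ - 1) := by
    simpa using (hasSum_nat_add_iff' 1).2 (hasSum_geometric_of_abs_lt_one hx)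
  have hfin : HasSum (fun j => (b (j + 1) - 1) * x ^ (j + 1))
      (∑ j ∈ range k, (b (j + 1) - 1) * x ^ (j + 1)) :=
    hasSum_sum_of_ne_finset_zero fun j hj => by
      rw [hb (j + 1) (Nat.lt_succ_of_le (by simpa using hj)), sub_self, zero_mul]
  have hsum := (hgeom.add hfin).tsum_eq
  simp only [sub_mul, one_mul, add_sub_cancel] at hsum
  simp only [unitSeries, hsum, sub_mul, one_mul]
  ring

theorem unitSeriesDeriv_eq_of_eventually_one (hb : ∀ n > k, b n = 1) (hx : |x| < 1) :
    unitSeriesDeriv b x =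
      1 / (1 - x) ^ 2 + ∑ j ∈ range k, ((j : ℝ) + 1) * (b (j + 1) - 1) * x ^ j := by
  have hfin : HasSum (fun j : ℕ => ((j : ℝ) + 1) * (b (j + 1) - 1) * x ^ j)
      (∑ j ∈ range k, ((j : ℝ) + 1) * (b (j + 1) - 1) * x ^ j) :=
    hasSum_sum_of_ne_finset_zero fun j hj => by
      rw [hb (j + 1) (Nat.lt_succ_of_le (by simpa using hj)), sub_self, mul_zero, zero_mul]
  rw [← ((hasSum_succ_mul_pow hx).add hfin).tsum_eq, unitSeriesDeriv]
  exact tsum_congr fun j => by ring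

end ClosedForm

section SignChange

variable {a b : ℕ → ℝ} {A B x y : ℝ} {k : ℕ}

theorem unitSeriesDeriv_lt_of_unitSeries_lt (ha : ∀ n ≥ 1, |a n| ≤ A) (hb : ∀ n ≥ 1, |b n| ≤ B)
    (hlow : ∀ n ≥ 1, n < k → b n ≤ a n) (hhigh : ∀ n > k, a n ≤ b n) (hk : 0 < k)
    (hx₀ : 0 ≤ x) (hx₁ : x < 1) (hlt : unitSeries a x < unitSeries b x) :
    unitSeriesDeriv a x < unitSeriesDeriv b x := by
  have hx : |x| < 1 := by rwa [abs_of_nonneg hx₀]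
  have hsum := (((summable_unitSeriesDeriv ha hx).hasSum.sub
    (summable_unitSeriesDeriv hb hx).hasSum).mul_left x).sub
    (((summable_unitSeries ha hx).hasSum.sub (summable_unitSeries hb hx).hasSum).mul_left (k : ℝ))
  have heuler : x * (unitSeriesDeriv a x - unitSeriesDeriv b x)
      ≤ k * (unitSeries a x - unitSeries b x) := by
    rw [← sub_nonpos, unitSeries, unitSeries, add_sub_add_left_eq_sub]
    refine hasSum_le (fun j => ?_) hsum hasSum_zero
    have hterm : ((j + 1 : ℕ) - (k : ℝ)) * (a (j + 1) - b (j + 1)) ≤ 0 := by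
      rcases lt_trichotomy (j + 1) k with hj | hj | hj
      · exact mul_nonpos_of_nonpos_of_nonneg (sub_nonpos.2 (mod_cast hj.le))
          (sub_nonneg.2 (hlow _ (Nat.le_add_left 1 j) hj))
      · simp [hj]
      · exact mul_nonpos_of_nonneg_of_nonpos (sub_nonneg.2 (mod_cast hj.le))
          (sub_nonpos.2 (hhigh _ hj))
    calc _ = ((j + 1 : ℕ) - (k : ℝ)) * (a (j + 1) - b (j + 1)) * x ^ (j + 1) := by
          push_cast; ring
      _ ≤ 0 := mul_nonpos_of_nonpos_of_nonneg hterm (by positivity)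
  have hneg : x * (unitSeriesDeriv a x - unitSeriesDeriv b x) < 0 :=
    heuler.trans_lt (mul_neg_of_pos_of_neg (mod_cast hk) (sub_neg.2 hlt))
  exact sub_neg.1 (neg_of_mul_neg_right hneg hx₀)

-- `s ^ (k - 1)` is the power of `s` multiplying the degree `k` term of the derivative, so
-- the sign of `b k` does not matter.
theorem unitSeriesDeriv_mul_le {s : ℝ} (hb : ∀ n ≥ 1, |b n| ≤ B)
    (hlow : ∀ n > 1, n < k → b n ≤ 0) (hhigh : ∀ n > k, 0 ≤ b n) (hs₀ : 0 ≤ s) (hs₁ : s ≤ 1)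
    (hy₀ : 0 ≤ y) (hy₁ : y < 1) :
    unitSeriesDeriv b (s * y) ≤
      (1 - s ^ (k - 1)) * b 1 + s ^ (k - 1) * unitSeriesDeriv b y := by
  have hy : |y| < 1 := by rwa [abs_of_nonneg hy₀]
  have hsy : |s * y| < 1 := by
    rw [abs_of_nonneg (by positivity)]
    exact (mul_le_of_le_one_left hy₀ hs₁).trans_lt hy₁
  have hsum := ((summable_unitSeriesDeriv hb hy).hasSum.mul_left (s ^ (k - 1))).sub
    (summable_unitSeriesDeriv hb hsy).hasSum
  have hterm : ∀ j ∉ range 1, 0 ≤ s ^ (k - 1) * (((j : ℝ) + 1) * b (j + 1) * y ^ j)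
      - ((j : ℝ) + 1) * b (j + 1) * (s * y) ^ j := by
    intro j hj
    have hj₀ : 0 < j := by simpa [Nat.pos_iff_ne_zero] using hj
    have hsign : 0 ≤ b (j + 1) * (s ^ (k - 1) - s ^ j) := by
      rcases lt_trichotomy (j + 1) k with hjk | hjk | hjk
      · exact mul_nonneg_of_nonpos_of_nonpos (hlow _ (by lia) hjk)
          (sub_nonpos.2 (pow_le_pow_of_le_one hs₀ hs₁ (by lia)))
      · simp [← hjk]
      · exact mul_nonneg (hhigh _ hjk) (sub_nonneg.2 (pow_le_pow_of_le_one hs₀ hs₁ (by lia)))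
    calc (0 : ℝ) ≤ ((j : ℝ) + 1) * y ^ j * (b (j + 1) * (s ^ (k - 1) - s ^ j)) := by positivity
      _ = _ := by ring
  have hfirst := sum_le_hasSum (range 1) hterm hsum
  simp only [sum_range_one, Nat.cast_zero, zero_add, one_mul, pow_zero, mul_one] at hfirst
  change _ ≤ s ^ (k - 1) * unitSeriesDeriv b y - unitSeriesDeriv b (s * y) at hfirst
  linarith

theorem unitSeriesDeriv_le_max (hb : ∀ n ≥ 1, |b n| ≤ B) (hlow : ∀ n > 1, n < k → b n ≤ 0)
    (hhigh : ∀ n > k, 0 ≤ b n) (hx₀ : 0 ≤ x) (hxy : x ≤ y) (hy₁ : y < 1) :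
    unitSeriesDeriv b x ≤ max (b 1) (unitSeriesDeriv b y) := by
  have hy₀ : 0 ≤ y := hx₀.trans hxy
  have hs₀ : 0 ≤ x / y := div_nonneg hx₀ hy₀
  have hs₁ : x / y ≤ 1 := div_le_one_of_le₀ hxy hy₀
  have hx : x / y * y = x := div_mul_cancel_of_imp fun hy => le_antisymm (hy ▸ hxy) hx₀
  calc unitSeriesDeriv b x = unitSeriesDeriv b (x / y * y) := by rw [hx]
    _ ≤ (1 - (x / y) ^ (k - 1)) * b 1 + (x / y) ^ (k - 1) * unitSeriesDeriv b y :=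
        unitSeriesDeriv_mul_le hb hlow hhigh hs₀ hs₁ hy₀ hy₁
    _ ≤ max (b 1) (unitSeriesDeriv b y) :=
        Convex.combo_le_max _ _ (sub_nonneg.2 (pow_le_one₀ hs₀ hs₁)) (pow_nonneg hs₀ _)
          (sub_add_cancel _ _)

end SignChange

section StarFunction

variable {k n : ℕ} {t x δ ρ : ℝ}

theorem starCoeff_of_lt (h : n < k) : starCoeff k t n = -1 := if_pos h

theorem starCoeff_of_gt (h : k < n) : starCoeff k t n = 1 := by
  rw [starCoeff, if_neg h.not_gt, if_neg h.ne']

theorem abs_starCoeff_le : |starCoeff k t n| ≤ max 1 |t| := by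
  rcases lt_trichotomy n k with h | rfl | h
  · simp [starCoeff_of_lt h]
  · simp [starCoeff]
  · simp [starCoeff_of_gt h]

theorem unitSeriesDeriv_starCoeff_le (hk : 1 < k) (hx : x ∈ Set.Icc 0 ρ) (hρ : ρ < 1) :
    unitSeriesDeriv (starCoeff k t) x ≤ max (-1) (unitSeriesDeriv (starCoeff k t) ρ) := by
  rw [← starCoeff_of_lt (t := t) hk]
  exact unitSeriesDeriv_le_max (k := k) (fun _ _ => abs_starCoeff_le)
    (fun _ _ hn => by simp [starCoeff_of_lt hn]) (fun _ hn => by simp [starCoeff_of_gt hn])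
    hx.1 hx.2 hρ

theorem antitoneOn_unitSeries_starCoeff (hk : 1 < k) (hρ : ρ < 1)
    (hderiv : unitSeriesDeriv (starCoeff k t) ρ ≤ 0) :
    AntitoneOn (unitSeries (starCoeff k t)) (Set.Icc 0 ρ) := by
  have hdiff : ∀ x ∈ Set.Icc 0 ρ,
      HasDerivAt (unitSeries (starCoeff k t)) (unitSeriesDeriv (starCoeff k t) x) x :=
    fun x hx => hasDerivAt_unitSeries (fun _ _ => abs_starCoeff_le)
      (by rw [abs_of_nonneg hx.1]; exact hx.2.trans_lt hρ)
  refine antitoneOn_of_deriv_nonpos (convex_Icc 0 ρ)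
    (fun x hx => (hdiff x hx).continuousAt.continuousWithinAt)
    (fun x hx => (hdiff x (interior_subset hx)).differentiableAt.differentiableWithinAt)
    fun x hx => ?_
  rw [(hdiff x (interior_subset hx)).deriv]
  exact (unitSeriesDeriv_starCoeff_le hk (interior_subset hx) hρ).trans
    (max_le (by norm_num) hderiv)

theorem isTransversalOn_of_starCoeff (hk : 1 < k) (hδ : 0 ≤ δ) (hρ : ρ < 1)
    (hval : δ ≤ unitSeries (starCoeff k t) ρ)
    (hderiv : unitSeriesDeriv (starCoeff k t) ρ ≤ -δ) : IsTransversalOn δ ρ := by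
  intro a ha x hx hlt
  have hρ₀ : 0 ≤ ρ := hx.1.trans hx.2
  have hanti := antitoneOn_unitSeries_starCoeff hk hρ (hderiv.trans (neg_nonpos.2 hδ))
  have hδ₁ : δ ≤ 1 := by
    simpa [unitSeries] using hval.trans (hanti ⟨le_rfl, hρ₀⟩ ⟨hρ₀, le_rfl⟩ hρ₀)
  have hcoeff : ∀ n ≥ 1, -1 ≤ a n ∧ a n ≤ 1 := fun n hn => abs_le.1 (ha n hn)
  calc unitSeriesDeriv a x < unitSeriesDeriv (starCoeff k t) x :=
        unitSeriesDeriv_lt_of_unitSeries_lt ha (fun _ _ => abs_starCoeff_le)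
          (fun n hn hnk => (starCoeff_of_lt hnk).trans_le (hcoeff n hn).1)
          (fun n hn => ((hcoeff n (by lia)).2.trans_eq (starCoeff_of_gt hn).symm))
          (by lia) hx.1 (hx.2.trans_lt hρ)
          (hlt.trans_le (hval.trans (hanti hx ⟨hρ₀, le_rfl⟩ hx.2)))
    _ ≤ max (-1) (unitSeriesDeriv (starCoeff k t) ρ) := unitSeriesDeriv_starCoeff_le hk hx hρ
    _ ≤ -δ := max_le (neg_le_neg hδ₁) hderiv

end StarFunction

theorem peres_solomyak_transversality_general : ∃ δ > 0, IsTransversalOn δ 0.649 := by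
  have hρ : |(0.649 : ℝ)| < 1 := by norm_num [abs_lt]
  refine ⟨0.0001, by norm_num, isTransversalOn_of_starCoeff (k := 4) (t := 0.0894)
    (by norm_num) (by norm_num) (by norm_num) ?_ ?_⟩
  · rw [unitSeries_eq_of_eventually_one (fun _ => starCoeff_of_gt) hρ]
    norm_num [sum_range_succ, starCoeff]
  · rw [unitSeriesDeriv_eq_of_eventually_one (fun _ => starCoeff_of_gt) hρ]
    norm_num [sum_range_succ, starCoeff]

/-- Peres–Solomyak δ-transversality: for every ρ ≤ 0.649 there is δ > 0 such that for
any power series g(x) = 1 + Σ_{j≥1} a_j x^j with a_j ∈ {-1,0,1} and x ∈ [0,ρ],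
g(x) < δ implies g'(x) < -δ. -/
theorem peres_solomyak_transversality :
    ∀ ρ : ℝ, 0 < ρ → ρ ≤ 0.649 →
      ∃ δ > 0, ∀ a : ℕ → ℝ, (∀ j ≥ 1, a j = -1 ∨ a j = 0 ∨ a j = 1) →
        ∀ x ∈ Set.Icc (0 : ℝ) ρ,
          1 + (∑' j : ℕ, a (j + 1) * x ^ (j + 1)) < δ →
          (∑' j : ℕ, ((j : ℝ) + 1) * a (j + 1) * x ^ j) < -δ := by
  intro ρ _ hρ
  obtain ⟨δ, hδ, htrans⟩ := peres_solomyak_transversality_general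
  refine ⟨δ, hδ, fun a ha x hx => htrans a (fun j hj => ?_) x ⟨hx.1, hx.2.trans hρ⟩⟩
  rcases ha j hj with h | h | h <;> simp [h]
end

section
/- Let (b_j)_{j≥0} be a sequence with b_0 ∈ {-1,1} and b_j ∈ {-1,0,1} for all j ≥ 1, and let g(x) = Σ_{j=0}^∞ b_j x^j. Then g has at most one root in the interval (0, 0.649]: if x₁, x₂ ∈ (0, 0.649] satisfy g(x₁) = g(x₂) = 0, then x₁ = x₂. Moreover any such root is simple: if x₀ ∈ (0, 0.649] and g(x₀) = 0, then the term-by-term derivative Σ_{j=1}^∞ j b_j x₀^{j-1} is nonzero. -/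
/-!
Normalise the sign so that `b 0 > 0`, and let `g x = ∑ b j x ^ j`. For every `k`, the series
`k g(x) - x g'(x) = ∑ (k - j) b j x ^ j` has constant term `k b 0` and all its other coefficients
satisfy `|(k - j) b j| ≤ |k - j| b 0`, so it is at least `b 0 (2 k - ∑ |k - j| x ^ j)`. Where this
bound is positive, a zero of `g` cannot be a zero of `g'`, and `g(x) / x ^ k` is strictly
decreasing, so it vanishes at most once. The bound increases as `x` decreases, and with `k = 4`
it is still (barely) positive at `x = 0.649`.
-/

open Set

section TermwiseDerivative

variable {𝕜 : Type*} [RCLike 𝕜] {b : ℕ → 𝕜} {C : ℝ} {x : 𝕜}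

lemma summable_mul_pow_of_norm_le (hb : ∀ j, ‖b j‖ ≤ C) (hx : ‖x‖ < 1) :
    Summable fun j ↦ b j * x ^ j := by
  refine .of_norm_bounded ((summable_geometric_of_lt_one (norm_nonneg x) hx).mul_left C) fun j ↦ ?_
  rw [norm_mul, norm_pow]
  gcongr
  exact hb j

lemma norm_succ_mul_mul_pow_le (hb : ∀ j, ‖b j‖ ≤ C) {r : ℝ} (hx : ‖x‖ ≤ r) (j : ℕ) :
    ‖((j : 𝕜) + 1) * b (j + 1) * x ^ j‖ ≤ C * ((j + 1) * r ^ j) := by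
  have hC : 0 ≤ C := (norm_nonneg _).trans (hb 0)
  calc ‖((j : 𝕜) + 1) * b (j + 1) * x ^ j‖ = ‖b (j + 1)‖ * ((j + 1) * ‖x‖ ^ j) := by
        rw [norm_mul, norm_mul, norm_pow, ← Nat.cast_succ, RCLike.norm_natCast, Nat.cast_succ]
        ring
    _ ≤ C * ((j + 1) * r ^ j) := by
        gcongr
        exact hb _

lemma summable_succ_mul_geometric_of_norm_lt_one (hx : ‖x‖ < 1) :
    Summable fun j : ℕ ↦ ((j : 𝕜) + 1) * x ^ j := by
  simpa using summable_choose_mul_geometric_of_norm_lt_one 1 hx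

lemma summable_succ_mul_mul_pow_of_norm_le (hb : ∀ j, ‖b j‖ ≤ C) (hx : ‖x‖ < 1) :
    Summable fun j : ℕ ↦ ((j : 𝕜) + 1) * b (j + 1) * x ^ j :=
  .of_norm_bounded
    ((summable_succ_mul_geometric_of_norm_lt_one (by rwa [norm_norm])).mul_left C)
    (norm_succ_mul_mul_pow_le hb le_rfl)

lemma hasDerivAt_tsum_mul_pow_of_norm_le (hb : ∀ j, ‖b j‖ ≤ C) (hx : ‖x‖ < 1) :
    HasDerivAt (fun y ↦ ∑' j, b j * y ^ j) (∑' j : ℕ, ((j : 𝕜) + 1) * b (j + 1) * x ^ j) x := by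
  obtain ⟨r, hxr, hr⟩ := exists_between hx
  have hr0 : 0 ≤ r := (norm_nonneg x).trans hxr.le
  have term_deriv (j : ℕ) (y : 𝕜) :
      HasDerivAt (fun y ↦ b (j + 1) * y ^ (j + 1)) ((j + 1) * b (j + 1) * y ^ j) y :=
    ((hasDerivAt_pow (j + 1) y).const_mul _).congr_deriv (by push_cast; ring)
  have tail_summable : Summable fun j ↦ b (j + 1) * x ^ (j + 1) :=
    (summable_nat_add_iff 1 (f := fun j ↦ b j * x ^ j)).2 (summable_mul_pow_of_norm_le hb hx)
  have tail_deriv : HasDerivAt (fun y ↦ ∑' j, b (j + 1) * y ^ (j + 1))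
      (∑' j : ℕ, ((j : 𝕜) + 1) * b (j + 1) * x ^ j) x :=
    hasDerivAt_tsum_of_isPreconnected
      ((summable_succ_mul_geometric_of_norm_lt_one (by rwa [Real.norm_of_nonneg hr0])).mul_left C)
      Metric.isOpen_ball Metric.isPreconnected_ball (fun j y _ ↦ term_deriv j y)
      (fun j y hy ↦ norm_succ_mul_mul_pow_le hb (mem_ball_zero_iff.1 hy).le j)
      (mem_ball_zero_iff.2 hxr) tail_summable (mem_ball_zero_iff.2 hxr)
  refine (tail_deriv.const_add (b 0)).congr_of_eventuallyEq ?_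
  filter_upwards [Metric.isOpen_ball.mem_nhds (mem_ball_zero_iff.2 hx)] with y hy
  simpa using (summable_mul_pow_of_norm_le hb (mem_ball_zero_iff.1 hy)).tsum_eq_zero_add

lemma hasSum_sub_mul_mul_pow_of_norm_le (hb : ∀ j, ‖b j‖ ≤ C) (hx : ‖x‖ < 1) (a : 𝕜) :
    HasSum (fun j : ℕ ↦ (a - j) * (b j * x ^ j))
      (a * (∑' j, b j * x ^ j) - x * ∑' j : ℕ, ((j : 𝕜) + 1) * b (j + 1) * x ^ j) := by
  have shifted_term (j : ℕ) : ((j + 1 : ℕ) : 𝕜) * (b (j + 1) * x ^ (j + 1)) =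
      x * (((j : 𝕜) + 1) * b (j + 1) * x ^ j) := by
    push_cast
    ring
  have euler_hasSum : HasSum (fun j : ℕ ↦ (j : 𝕜) * (b j * x ^ j))
      (x * ∑' j : ℕ, ((j : 𝕜) + 1) * b (j + 1) * x ^ j) := by
    simpa using HasSum.zero_add (f := fun j : ℕ ↦ (j : 𝕜) * (b j * x ^ j))
      (((summable_succ_mul_mul_pow_of_norm_le hb hx).hasSum.mul_left x).congr_fun shifted_term)
  simpa only [sub_mul] using
    ((summable_mul_pow_of_norm_le hb hx).hasSum.mul_left a).sub euler_hasSum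

end TermwiseDerivative

section AbsSubSeries

variable {x : ℝ} (k : ℕ)

lemma hasSum_abs_sub_mul_pow (hx : |x| < 1) :
    HasSum (fun j : ℕ ↦ |(k : ℝ) - j| * x ^ j)
      (∑ j ∈ Finset.range k, ((k : ℝ) - j) * x ^ j + x ^ (k + 1) / (1 - x) ^ 2) := by
  have head_eq : ∑ j ∈ Finset.range k, ((k : ℝ) - j) * x ^ j =
      ∑ j ∈ Finset.range k, |(k : ℝ) - j| * x ^ j :=
    Finset.sum_congr rfl fun j hj ↦ by
      rw [abs_of_nonneg (sub_nonneg.2 (by exact_mod_cast (Finset.mem_range.1 hj).le))]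
  have tail_term (j : ℕ) : |(k : ℝ) - (j + k : ℕ)| * x ^ (j + k) = x ^ k * (j * x ^ j) := by
    rw [Nat.cast_add, sub_add_cancel_right, abs_neg, Nat.abs_cast]
    ring
  have tail_hasSum : HasSum (fun j : ℕ ↦ |(k : ℝ) - (j + k : ℕ)| * x ^ (j + k))
      (x ^ k * (x / (1 - x) ^ 2)) :=
    ((hasSum_coe_mul_geometric_of_norm_lt_one hx).mul_left (x ^ k)).congr_fun tail_term
  rw [head_eq, pow_succ, mul_div_assoc]
  exact HasSum.sum_range_add (f := fun j : ℕ ↦ |(k : ℝ) - j| * x ^ j) tail_hasSum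

lemma tsum_abs_sub_mul_pow_le {y : ℝ} (hx : 0 ≤ x) (hxy : x ≤ y) (hy : y < 1) :
    ∑' j : ℕ, |(k : ℝ) - j| * x ^ j ≤ ∑' j : ℕ, |(k : ℝ) - j| * y ^ j := by
  have summable {z : ℝ} (hz : 0 ≤ z) (hz1 : z < 1) : Summable fun j : ℕ ↦ |(k : ℝ) - j| * z ^ j :=
    (hasSum_abs_sub_mul_pow k (by rwa [abs_of_nonneg hz])).summable
  refine (summable hx (hxy.trans_lt hy)).tsum_le_tsum (fun j ↦ ?_) (summable (hx.trans hxy) hy)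
  gcongr

end AbsSubSeries

lemma mul_two_mul_sub_tsum_abs_le {b : ℕ → ℝ} (hb : ∀ j, |b j| ≤ b 0) (k : ℕ) {x : ℝ}
    (hx0 : 0 ≤ x) (hx1 : x < 1) :
    b 0 * (2 * k - ∑' j : ℕ, |(k : ℝ) - j| * x ^ j) ≤
      k * (∑' j, b j * x ^ j) - x * ∑' j : ℕ, ((j : ℝ) + 1) * b (j + 1) * x ^ j := by
  have hx : |x| < 1 := by rwa [abs_of_nonneg hx0]
  have hsum := ((hasSum_abs_sub_mul_pow k hx).summable.hasSum.mul_left (b 0)).add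
    (hasSum_sub_mul_mul_pow_of_norm_le hb hx (k : ℝ))
  have term_nonneg (j : ℕ) :
      0 ≤ b 0 * (|(k : ℝ) - j| * x ^ j) + ((k : ℝ) - j) * (b j * x ^ j) := by
    have coeff_le : |((k : ℝ) - j) * b j| ≤ |(k : ℝ) - j| * b 0 := by
      rw [abs_mul]
      gcongr
      exact hb j
    calc 0 ≤ (|(k : ℝ) - j| * b 0 + ((k : ℝ) - j) * b j) * x ^ j :=
          mul_nonneg (neg_le_iff_add_nonneg'.1 (abs_le.1 coeff_le).1) (pow_nonneg hx0 j)
      _ = b 0 * (|(k : ℝ) - j| * x ^ j) + ((k : ℝ) - j) * (b j * x ^ j) := by ring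
  have zeroth_le := le_hasSum hsum 0 fun j _ ↦ term_nonneg j
  simp only [Nat.cast_zero, sub_zero, Nat.abs_cast, pow_zero, mul_one] at zeroth_le
  linarith

lemma mul_tsum_succ_mul_lt_mul_tsum {b : ℕ → ℝ} (hb0 : 0 < b 0) (hb : ∀ j, |b j| ≤ b 0)
    {k : ℕ} {r : ℝ} (hr : r < 1) (hk : ∑' j : ℕ, |(k : ℝ) - j| * r ^ j < 2 * k)
    {x : ℝ} (hx : x ∈ Icc 0 r) :
    x * ∑' j : ℕ, ((j : ℝ) + 1) * b (j + 1) * x ^ j < k * ∑' j, b j * x ^ j := by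
  have gap_pos : 0 < 2 * k - ∑' j : ℕ, |(k : ℝ) - j| * x ^ j :=
    sub_pos.2 ((tsum_abs_sub_mul_pow_le k hx.1 hx.2 hr).trans_lt hk)
  exact sub_pos.1 ((mul_pos hb0 gap_pos).trans_le
    (mul_two_mul_sub_tsum_abs_le hb k hx.1 (hx.2.trans_lt hr)))

lemma strictAntiOn_div_pow_of_mul_deriv_lt {f f' : ℝ → ℝ} {s : Set ℝ} {k : ℕ} (hs : Convex ℝ s)
    (hs0 : s ⊆ Ioi 0) (hf : ∀ x ∈ s, HasDerivAt f (f' x) x)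
    (hlt : ∀ x ∈ s, x * f' x < k * f x) : StrictAntiOn (fun x ↦ f x / x ^ k) s := by
  have quotient_deriv (x : ℝ) (hx : x ∈ s) :
      HasDerivAt (fun x ↦ f x / x ^ k) ((x * f' x - k * f x) / x ^ (k + 1)) x := by
    have hx0 : x ≠ 0 := (hs0 hx).ne'
    refine ((hf x hx).fun_div (hasDerivAt_pow k x) (pow_ne_zero k hx0)).congr_deriv ?_
    cases k with
    | zero => simp [hx0]
    | succ n =>
      rw [Nat.add_sub_cancel]
      field_simp
      ring
  refine strictAntiOn_of_deriv_neg hs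
    (fun x hx ↦ (quotient_deriv x hx).continuousAt.continuousWithinAt) fun x hx ↦ ?_
  have hxs := interior_subset hx
  rw [(quotient_deriv x hxs).deriv]
  exact div_neg_of_neg_of_pos (sub_neg.2 (hlt x hxs)) (pow_pos (hs0 hxs) _)

theorem class_B_at_most_one_root_general {b : ℕ → ℝ} (hb0 : b 0 ≠ 0) (hb : ∀ j, |b j| ≤ |b 0|)
    {k : ℕ} {r : ℝ} (hr : r < 1) (hk : ∑' j : ℕ, |(k : ℝ) - j| * r ^ j < 2 * k) :
    (∀ x₁ ∈ Ioc 0 r, ∀ x₂ ∈ Ioc 0 r,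
      (∑' j : ℕ, b j * x₁ ^ j) = 0 → (∑' j : ℕ, b j * x₂ ^ j) = 0 → x₁ = x₂) ∧
    (∀ x₀ ∈ Ioc 0 r, (∑' j : ℕ, b j * x₀ ^ j) = 0 →
      (∑' j : ℕ, ((j : ℝ) + 1) * b (j + 1) * x₀ ^ j) ≠ 0) := by
  wlog hpos : 0 < b 0 generalizing b
  · have hneg : 0 < -b 0 := neg_pos.2 (lt_of_le_of_ne (not_lt.1 hpos) hb0)
    simpa [tsum_neg] using this (b := -b) hneg.ne' (by simpa using hb) hneg
  rw [abs_of_pos hpos] at hb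
  have euler_lt : ∀ x ∈ Ioc 0 r,
      x * ∑' j : ℕ, ((j : ℝ) + 1) * b (j + 1) * x ^ j < k * ∑' j, b j * x ^ j := fun x hx ↦
    mul_tsum_succ_mul_lt_mul_tsum hpos hb hr hk (Ioc_subset_Icc_self hx)
  refine ⟨fun x₁ h₁ x₂ h₂ root₁ root₂ ↦ ?_, fun x₀ h₀ root deriv_zero ↦ ?_⟩
  · have quotient_anti := strictAntiOn_div_pow_of_mul_deriv_lt (convex_Ioc 0 r) (fun _ hx ↦ hx.1)
      (fun x hx ↦ hasDerivAt_tsum_mul_pow_of_norm_le hb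
        (by rw [Real.norm_of_nonneg hx.1.le]; exact hx.2.trans_lt hr)) euler_lt
    exact quotient_anti.injOn h₁ h₂ (by simp only [root₁, root₂, zero_div])
  · simpa [root, deriv_zero] using euler_lt x₀ h₀

lemma tsum_abs_four_sub_mul_pow_lt : ∑' j : ℕ, |((4 : ℕ) : ℝ) - j| * 0.649 ^ j < 2 * (4 : ℕ) := by
  rw [(hasSum_abs_sub_mul_pow 4 (by norm_num)).tsum_eq]
  norm_num [Finset.sum_range_succ]

lemma abs_coeff_le_abs_coeff_zero {b : ℕ → ℝ} (hb0 : b 0 = 1 ∨ b 0 = -1)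
    (hb : ∀ j ≥ 1, b j = -1 ∨ b j = 0 ∨ b j = 1) (j : ℕ) : |b j| ≤ |b 0| := by
  have abs_coeff_zero : |b 0| = 1 := by rcases hb0 with h | h <;> simp [h]
  rcases j.eq_zero_or_pos with rfl | hj
  · rfl
  · rcases hb j hj with h | h | h <;> simp [h, abs_coeff_zero]

/-- A power series ±1 + Σ_{j≥1} b_j x^j with b_j ∈ {-1,0,1} has at most one root in
(0, 0.649], and any such root is simple (the term-by-term derivative is nonzero there). -/
theorem class_B_at_most_one_root (b : ℕ → ℝ)
    (hb0 : b 0 = 1 ∨ b 0 = -1)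
    (hb : ∀ j ≥ 1, b j = -1 ∨ b j = 0 ∨ b j = 1) :
    (∀ x₁ ∈ Set.Ioc (0 : ℝ) 0.649, ∀ x₂ ∈ Set.Ioc (0 : ℝ) 0.649,
      (∑' j : ℕ, b j * x₁ ^ j) = 0 → (∑' j : ℕ, b j * x₂ ^ j) = 0 → x₁ = x₂) ∧
    (∀ x₀ ∈ Set.Ioc (0 : ℝ) 0.649, (∑' j : ℕ, b j * x₀ ^ j) = 0 →
      (∑' j : ℕ, ((j : ℝ) + 1) * b (j + 1) * x₀ ^ j) ≠ 0) := by
  exact class_B_at_most_one_root_general (by rcases hb0 with h | h <;> simp [h])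
    (abs_coeff_le_abs_coeff_zero hb0 hb) (by norm_num) tsum_abs_four_sub_mul_pow_lt
end

section
/- Let φ = (1+√5)/2 and let 0 ≤ ν < 1. Suppose (u_j)_{j≥1} and (b_j)_{j≥1} are sequences with u_1 = 0, u_{j+1} = φ(u_j − b_j) for all j ≥ 1, where each b_j ∈ {-1,1}, b_j = 1 whenever u_j > ν, and b_j = -1 whenever u_j < -ν. Then for every j ≥ 0, b_{3j+2} = b_{3j+3} = −b_{3j+1}. -/
/-!
Start from `u k = 0` and write `s = -b k`. The next two states are `β * s` and
`(β ^ 2 - β) * s = s`, both larger in absolute value than the tolerance, so both of their bits are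
forced to equal `s`. The state after those is `β * (s - s) = 0`, and the cycle restarts.
-/

variable {R : Type*} [Ring R] [PartialOrder R]

/-- `b` is an admissible output of a flaky one-bit quantizer of tolerance `ν` on the input `x`;
on inputs between `-ν` and `ν` both bits are allowed. -/
structure IsFlakyBit (ν x b : R) : Prop where
  eq_one_or_eq_neg_one : b = 1 ∨ b = -1
  eq_one : ν < x → b = 1
  eq_neg_one : x < -ν → b = -1

/-- The states `u` and bits `b` of a run of the beta-encoder with base `β` and a flaky quantizer of
tolerance `ν`. Indices start at `0`, so `u 0` and `b 0` are `u₁` and `b₁` in the usual notation. -/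
structure IsBetaEncoding (β ν : R) (u b : ℕ → R) : Prop where
  state_succ : ∀ j, u (j + 1) = β * (u j - b j)
  isFlakyBit : ∀ j, IsFlakyBit ν (u j) (b j)

namespace IsFlakyBit

theorem neg_eq_one_or_eq_neg_one {ν x b : R} (h : IsFlakyBit ν x b) : -b = 1 ∨ -b = -1 :=
  h.eq_one_or_eq_neg_one.symm.imp neg_eq_iff_eq_neg.2 (congrArg Neg.neg)

theorem eq_of_lt_of_eq_mul [IsOrderedAddMonoid R] {ν x b r s : R} (h : IsFlakyBit ν x b)
    (hs : s = 1 ∨ s = -1) (hr : ν < r) (hx : x = r * s) : b = s := by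
  rcases hs with rfl | rfl
  · exact h.eq_one (by rwa [hx, mul_one])
  · exact h.eq_neg_one (by rwa [hx, mul_neg_one, neg_lt_neg_iff])

end IsFlakyBit

namespace IsBetaEncoding

variable {β ν : R} {u b : ℕ → R} {k : ℕ}

theorem state_add_one_of_state_eq_zero (h : IsBetaEncoding β ν u b) (hk : u k = 0) :
    u (k + 1) = β * -b k := by
  rw [h.state_succ, hk, zero_sub]

variable [IsOrderedAddMonoid R]

theorem bit_add_one_of_state_eq_zero (h : IsBetaEncoding β ν u b) (hνβ : ν < β) (hk : u k = 0) :
    b (k + 1) = -b k :=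
  (h.isFlakyBit (k + 1)).eq_of_lt_of_eq_mul (h.isFlakyBit k).neg_eq_one_or_eq_neg_one hνβ
    (h.state_add_one_of_state_eq_zero hk)

theorem state_add_two_of_state_eq_zero (h : IsBetaEncoding β ν u b) (hβ : β ^ 2 = β + 1)
    (hνβ : ν < β) (hk : u k = 0) : u (k + 2) = -b k := by
  calc
    u (k + 2) = β * (β * -b k - -b k) := by
      rw [h.state_succ, h.state_add_one_of_state_eq_zero hk, h.bit_add_one_of_state_eq_zero hνβ hk]
    _ = (β ^ 2 - β) * -b k := by rw [mul_sub, ← mul_assoc, ← sq, ← sub_mul]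
    _ = -b k := by rw [hβ, add_sub_cancel_left, one_mul]

theorem bit_add_two_of_state_eq_zero (h : IsBetaEncoding β ν u b) (hβ : β ^ 2 = β + 1)
    (hν : ν < 1) (hνβ : ν < β) (hk : u k = 0) : b (k + 2) = -b k :=
  (h.isFlakyBit (k + 2)).eq_of_lt_of_eq_mul (h.isFlakyBit k).neg_eq_one_or_eq_neg_one hν <| by
    rw [h.state_add_two_of_state_eq_zero hβ hνβ hk, one_mul]

theorem state_add_three_of_state_eq_zero (h : IsBetaEncoding β ν u b) (hβ : β ^ 2 = β + 1)
    (hν : ν < 1) (hνβ : ν < β) (hk : u k = 0) : u (k + 3) = 0 := by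
  rw [h.state_succ, h.state_add_two_of_state_eq_zero hβ hνβ hk,
    h.bit_add_two_of_state_eq_zero hβ hν hνβ hk, sub_self, mul_zero]

theorem state_three_mul_eq_zero (h : IsBetaEncoding β ν u b) (hβ : β ^ 2 = β + 1)
    (hν : ν < 1) (hνβ : ν < β) (h0 : u 0 = 0) (j : ℕ) : u (3 * j) = 0 := by
  induction j with
  | zero => exact h0
  | succ j ih => exact h.state_add_three_of_state_eq_zero hβ hν hνβ ih

end IsBetaEncoding

theorem golden_base_zero_expansion_periodic_general [IsOrderedAddMonoid R] {β ν : R}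
    {u b : ℕ → R} (h : IsBetaEncoding β ν u b) (hβ : β ^ 2 = β + 1) (hν : ν < 1) (hνβ : ν < β)
    (h0 : u 0 = 0) (j : ℕ) : b (3 * j + 1) = -b (3 * j) ∧ b (3 * j + 2) = -b (3 * j) :=
  have hj : u (3 * j) = 0 := h.state_three_mul_eq_zero hβ hν hνβ h0 j
  ⟨h.bit_add_one_of_state_eq_zero hνβ hj, h.bit_add_two_of_state_eq_zero hβ hν hνβ hj⟩

/-- The beta-encoder with base φ applied to x = 0 (so u₁ = 0) and a flaky quantizer of
tolerance ν < 1 produces a bitstream with the periodic pattern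
b_{3j+2} = b_{3j+3} = -b_{3j+1}. -/
theorem golden_base_zero_expansion_periodic (ν : ℝ) (hν : 0 ≤ ν) (hν' : ν < 1)
    (u b : ℕ → ℝ) (hu1 : u 1 = 0)
    (hrec : ∀ j ≥ 1, u (j + 1) = (1 + Real.sqrt 5) / 2 * (u j - b j))
    (hb : ∀ j ≥ 1, b j = 1 ∨ b j = -1)
    (hq1 : ∀ j ≥ 1, u j > ν → b j = 1)
    (hq2 : ∀ j ≥ 1, u j < -ν → b j = -1) :
    ∀ j : ℕ, b (3 * j + 2) = -b (3 * j + 1) ∧ b (3 * j + 3) = -b (3 * j + 1) := by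
  have h : IsBetaEncoding Real.goldenRatio ν (fun j ↦ u (j + 1)) (fun j ↦ b (j + 1)) :=
    ⟨fun j ↦ hrec (j + 1) j.succ_pos,
      fun j ↦ ⟨hb _ j.succ_pos, hq1 _ j.succ_pos, hq2 _ j.succ_pos⟩⟩
  exact golden_base_zero_expansion_periodic_general h Real.goldenRatio_sq hν'
    (hν'.trans Real.one_lt_goldenRatio) hu1
end

section
/- Let β be a real number with 1 < β ≤ 2 and let x ∈ [−1/(β−1), 1/(β−1)]. Then there exists a sequence (b_j)_{j≥1} with b_j ∈ {-1,1} for all j such that x = Σ_{j=1}^∞ b_j β^{-j}. -/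
/-!
For `|y| ≤ 1 / (β - 1)` some digit `d = ±1` gives `|β y - d| ≤ 1 / (β - 1)`. Starting from `x` and
iterating `y ↦ β y - d` produces bounded remainders `r n`, and `d n β⁻⁽ⁿ⁺¹⁾` is the telescoping
difference `β⁻ⁿ r n - β⁻⁽ⁿ⁺¹⁾ r (n + 1)`, so the digits sum to `r 0 = x`.
-/

section Expansion

variable {𝕜 E : Type*} [NormedField 𝕜] [NormedAddCommGroup E]

theorem hasSum_sub_succ_of_summable_norm {f : ℕ → E} (hf : Summable fun n ↦ ‖f n‖) :
    HasSum (fun n ↦ f n - f (n + 1)) (f 0) := by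
  have hf_succ : Summable fun n ↦ ‖f (n + 1)‖ := (summable_nat_add_iff 1).2 hf
  have hf_sub : Summable fun n ↦ ‖f n - f (n + 1)‖ :=
    (hf.add hf_succ).of_nonneg_of_le (fun _ ↦ norm_nonneg _) fun _ ↦ norm_sub_le _ _
  have hf_zero : Filter.Tendsto f Filter.atTop (nhds 0) :=
    tendsto_zero_iff_norm_tendsto_zero.2 hf.tendsto_atTop_zero
  rw [hasSum_iff_tendsto_nat_of_summable_norm hf_sub]
  simpa only [Finset.sum_range_sub', sub_zero] using hf_zero.const_sub (f 0)

variable [NormedSpace 𝕜 E] {β : 𝕜}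

theorem summable_norm_inv_pow_smul (hβ : 1 < ‖β‖) {r : ℕ → E} {C : ℝ} (hr : ∀ n, ‖r n‖ ≤ C) :
    Summable fun n ↦ ‖β⁻¹ ^ n • r n‖ := by
  have hgeom : Summable fun n ↦ ‖β‖⁻¹ ^ n * C :=
    (summable_geometric_of_lt_one (by positivity) (inv_lt_one_of_one_lt₀ hβ)).mul_right C
  refine hgeom.of_nonneg_of_le (fun _ ↦ norm_nonneg _) fun n ↦ ?_
  rw [norm_smul, norm_pow, norm_inv]
  gcongr
  exact hr n

theorem hasSum_inv_pow_smul_of_bounded_remainders (hβ : 1 < ‖β‖) {r d : ℕ → E} {C : ℝ}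
    (hr : ∀ n, ‖r n‖ ≤ C) (hrd : ∀ n, r (n + 1) = β • r n - d n) :
    HasSum (fun n ↦ β⁻¹ ^ (n + 1) • d n) (r 0) := by
  have hβ₀ : β ≠ 0 := norm_pos_iff.1 (one_pos.trans hβ)
  have hterm (n : ℕ) : β⁻¹ ^ (n + 1) • d n = β⁻¹ ^ n • r n - β⁻¹ ^ (n + 1) • r (n + 1) := by
    rw [hrd, smul_sub, smul_smul, pow_succ, inv_mul_cancel_right₀ hβ₀, sub_sub_cancel]
  simpa only [hterm, pow_zero, one_smul] using
    hasSum_sub_succ_of_summable_norm (summable_norm_inv_pow_smul hβ hr)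

theorem exists_hasSum_inv_pow_smul_of_isBounded (hβ : 1 < ‖β‖) {S D : Set E}
    (hS : Bornology.IsBounded S) (hSD : ∀ y ∈ S, ∃ d ∈ D, β • y - d ∈ S) {x : E} (hx : x ∈ S) :
    ∃ d : ℕ → E, (∀ n, d n ∈ D) ∧ HasSum (fun n ↦ β⁻¹ ^ (n + 1) • d n) x := by
  choose! digit digit_mem sub_digit_mem using hSD
  obtain ⟨C, hC⟩ := hS.exists_norm_le
  let r (n : ℕ) : E := (fun y ↦ β • y - digit y)^[n] x
  have hrS (n : ℕ) : r n ∈ S := Set.MapsTo.iterate sub_digit_mem n hx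
  have hr_succ (n : ℕ) : r (n + 1) = β • r n - digit (r n) := Function.iterate_succ_apply' _ n x
  exact ⟨fun n ↦ digit (r n), fun n ↦ digit_mem _ (hrS n),
    hasSum_inv_pow_smul_of_bounded_remainders hβ (fun n ↦ hC _ (hrS n)) hr_succ⟩

end Expansion

section SignDigits

variable {K : Type*} [Field K] [LinearOrder K] [IsStrictOrderedRing K] {β y : K}

theorem abs_mul_sub_one_le_of_nonneg (hβ : 1 < β) (hβ' : β ≤ 2) (hy₀ : 0 ≤ y)
    (hy : y ≤ 1 / (β - 1)) : |β * y - 1| ≤ 1 / (β - 1) := by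
  have hβ_sub : 0 < β - 1 := sub_pos.2 hβ
  have hlower : 1 ≤ 1 / (β - 1) := (one_le_div hβ_sub).2 (by linarith)
  have hupper : β * y ≤ 1 / (β - 1) + 1 := calc
    β * y ≤ β * (1 / (β - 1)) := by gcongr
    _ = 1 / (β - 1) + 1 := by field_simp; ring
  have hβy : 0 ≤ β * y := by positivity
  exact abs_le.2 ⟨by linarith, by linarith⟩

theorem exists_sign_abs_mul_sub_le (hβ : 1 < β) (hβ' : β ≤ 2) (hy : |y| ≤ 1 / (β - 1)) :
    ∃ d ∈ ({1, -1} : Set K), |β * y - d| ≤ 1 / (β - 1) := by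
  rcases le_total 0 y with hy₀ | hy₀
  · exact ⟨1, by simp, abs_mul_sub_one_le_of_nonneg hβ hβ' hy₀ ((le_abs_self y).trans hy)⟩
  · have hneg : |β * -y - 1| ≤ 1 / (β - 1) :=
      abs_mul_sub_one_le_of_nonneg hβ hβ' (neg_nonneg.2 hy₀) ((neg_le_abs y).trans hy)
    refine ⟨-1, by simp, ?_⟩
    rwa [← abs_neg, show -(β * y - -1) = β * -y - 1 by ring]

end SignDigits

/-- Every x ∈ [-1/(β-1), 1/(β-1)] admits a beta-expansion in base β ∈ (1,2] with
coefficients in {-1,1}. -/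
theorem exists_beta_expansion (β x : ℝ) (hβ : 1 < β) (hβ' : β ≤ 2)
    (hx : x ∈ Set.Icc (-(1 / (β - 1))) (1 / (β - 1))) :
    ∃ b : ℕ → ℝ, (∀ j ≥ 1, b j = 1 ∨ b j = -1) ∧
      x = ∑' j : ℕ, b (j + 1) * β⁻¹ ^ (j + 1) := by
  have hβ_norm : 1 < ‖β‖ := hβ.trans_le (Real.le_norm_self β)
  have hdigit : ∀ y ∈ Set.Icc (-(1 / (β - 1))) (1 / (β - 1)),
      ∃ d ∈ ({1, -1} : Set ℝ), β • y - d ∈ Set.Icc (-(1 / (β - 1))) (1 / (β - 1)) := by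
    simpa only [Set.mem_Icc, ← abs_le, smul_eq_mul] using
      fun y ↦ exists_sign_abs_mul_sub_le (y := y) hβ hβ'
  obtain ⟨d, hd, hsum⟩ :=
    exists_hasSum_inv_pow_smul_of_isBounded hβ_norm (Metric.isBounded_Icc _ _) hdigit hx
  refine ⟨fun j ↦ d (j - 1), fun j _ ↦ hd (j - 1), ?_⟩
  simpa only [smul_eq_mul, mul_comm, Nat.add_sub_cancel] using hsum.tsum_eq.symm
end
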